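/- arXiv:1809.05648 — 6 statements merged into one kernel-verified Lean document; each statement's English description precedes it below -/
import Mathlib

section
/- Let Ω be a convex set in ℝ^N and u a bounded nonnegative function on Ω. If u is α-logconcave in Ω for some α > 0, then u is p-concave in Ω for every p < 0, i.e., for every p < 0 and all x,y ∈ ℝ^N with U(x)U(y) > 0 and μ ∈ [0,1], one has U((1-μ)x+μy) ≥ ((1-μ)U(x)^p + μU(y)^p)^{1/p}, where U is the zero extension of u. -/
open MeasureTheory Real

/-- `L_α(s) = -(-log s)^{1/α}` for `s > 0`, and `-∞` for `s ≤ 0`, as an `EReal`-valued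
function. -/
noncomputable def Lfun (α : ℝ) (s : ℝ) : EReal :=
  if 0 < s then (((-((-Real.log s) ^ (1 / α))) : ℝ) : EReal) else ⊥

/-- Concavity of an `(ℝ ∪ {-∞})`-valued function on the whole space, with the conventions
`-∞ + a = -∞` and `-∞ ≥ -∞`. -/
def ERealConcaveOn {E : Type*} [AddCommGroup E] [Module ℝ E] (f : E → EReal) : Prop :=
  ∀ x y : E, ∀ μ : ℝ, 0 ≤ μ → μ ≤ 1 →
    ((1 - μ : ℝ) : EReal) * f x + (μ : EReal) * f y ≤ f ((1 - μ) • x + μ • y)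

/-- The Gauss kernel `G(x,t) = (4πt)^{-N/2} exp(-|x|²/(4t))`. -/
noncomputable def gauss (N : ℕ) (x : EuclideanSpace ℝ (Fin N)) (t : ℝ) : ℝ :=
  (4 * Real.pi * t) ^ (-(N : ℝ) / 2) * Real.exp (-‖x‖ ^ 2 / (4 * t))

/-- The heat semigroup `[e^{tΔ}u₀](x) = ∫ G(x-y,t) u₀(y) dy` on `ℝ^N`. -/
noncomputable def heatSol (N : ℕ) (u₀ : EuclideanSpace ℝ (Fin N) → ℝ) (t : ℝ)
    (x : EuclideanSpace ℝ (Fin N)) : ℝ :=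
  ∫ y, gauss N (x - y) t * u₀ y

/-- `u` is `α`-logconcave in `ℝ^N`: for all sufficiently small `κ > 0`, the function
`x ↦ L_α(κ u(x))` is concave as an `(ℝ ∪ {-∞})`-valued function. -/
def AlphaLogConcave {N : ℕ} (α : ℝ) (u : EuclideanSpace ℝ (Fin N) → ℝ) : Prop :=
  ∃ κ₀ : ℝ, 0 < κ₀ ∧ ∀ κ : ℝ, 0 < κ → κ ≤ κ₀ →
    ERealConcaveOn (fun x => Lfun α (κ * u x))

/-- `F : [0,1] → ℝ ∪ {-∞}` is admissible: strictly increasing and continuous on `(0,1]`,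
`F(0) = -∞`, and `F(s) ≠ -∞` for `s ∈ (0,1]`. -/
def Admissible (F : ℝ → EReal) : Prop :=
  StrictMonoOn F (Set.Ioc (0 : ℝ) 1) ∧ ContinuousOn F (Set.Ioc (0 : ℝ) 1) ∧
    F 0 = ⊥ ∧ ∀ s : ℝ, 0 < s → s ≤ 1 → F s ≠ ⊥

/-- `u` is `F`-concave in `ℝ^N`: for all sufficiently small `κ > 0`, one has
`0 ≤ κ u ≤ 1` and `x ↦ F(κ u(x))` is concave as an `(ℝ ∪ {-∞})`-valued function. -/
def FConcave {N : ℕ} (F : ℝ → EReal) (u : EuclideanSpace ℝ (Fin N) → ℝ) : Prop :=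
  ∃ κ₀ : ℝ, 0 < κ₀ ∧ ∀ κ : ℝ, 0 < κ → κ ≤ κ₀ →
    (∀ x, 0 ≤ κ * u x ∧ κ * u x ≤ 1) ∧
    ∀ x y : EuclideanSpace ℝ (Fin N), ∀ μ : ℝ, 0 ≤ μ → μ ≤ 1 →
      ((1 - μ : ℝ) : EReal) * F (κ * u x) + (μ : EReal) * F (κ * u y) ≤
        F (κ * u ((1 - μ) • x + μ • y))

/-- The zero extension of a function `u` on `Ω` to all of `ℝ^N`. -/
noncomputable def zeroExt {N : ℕ} (Ω : Set (EuclideanSpace ℝ (Fin N)))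
    (u : EuclideanSpace ℝ (Fin N) → ℝ) : EuclideanSpace ℝ (Fin N) → ℝ :=
  Ω.indicator u

/-- Concavity of an `(ℝ ∪ {-∞})`-valued function on a convex set `Ω`. -/
def ERealConcaveOnSet {E : Type*} [AddCommGroup E] [Module ℝ E]
    (Ω : Set E) (f : E → EReal) : Prop :=
  ∀ x ∈ Ω, ∀ y ∈ Ω, ∀ μ : ℝ, 0 ≤ μ → μ ≤ 1 →
    ((1 - μ : ℝ) : EReal) * f x + (μ : EReal) * f y ≤ f ((1 - μ) • x + μ • y)

/-! Let `κ → 0⁺` in the concavity inequality of `L_α(κU)` between two points where `U` takes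
positive values `a` and `b`, and let `c` be the value of `U` at the intermediate point. With
`t = -log κ` and `q = 1 / α`, the inequality bounds `(t - log c) ^ q` by the weighted mean of
`(t - log a) ^ q` and `(t - log b) ^ q`. As `(t - l) ^ q = t ^ q - q l t ^ (q - 1) + o(t ^ (q - 1))`
for `t → ∞`, comparing the terms of order `t ^ (q - 1)` shows that `log U` is concave, whatever `α`
is. For `p < 0` log-concavity implies `p`-concavity, because a weighted power mean of exponent `p`
is at most the weighted geometric mean. -/

open Filter Topology

theorem tendsto_sub_rpow_sub_rpow_div_rpow_atTop (q a : ℝ) :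
    Tendsto (fun t : ℝ => ((t - a) ^ q - t ^ q) / t ^ (q - 1)) atTop (𝓝 (-(q * a))) := by
  have hderiv : HasDerivAt (fun e : ℝ => (1 - e * a) ^ q) (-(q * a)) 0 := by
    have hlin : HasDerivAt (fun e : ℝ => 1 - e * a) (-a) 0 := by
      simpa using ((hasDerivAt_id (0 : ℝ)).mul_const a).const_sub 1
    convert! hlin.rpow_const (p := q) (Or.inl (by simp)) using 1
    simp [mul_comm]
  refine (hderiv.tendsto_slope_zero_right.comp tendsto_inv_atTop_nhdsGT_zero).congr' ?_
  filter_upwards [eventually_gt_atTop 0, eventually_ge_atTop a] with t ht hat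
  have hfactor : (t - a) ^ q = t ^ q * (1 - t⁻¹ * a) ^ q := by
    have hnonneg : 0 ≤ 1 - t⁻¹ * a := by
      rw [sub_nonneg, inv_mul_le_one₀ ht]
      exact hat
    rw [← mul_rpow ht.le hnonneg, mul_sub, mul_inv_cancel_left₀ ht.ne', mul_one]
  have hpow : t ^ q ≠ 0 := (rpow_pos_of_pos ht q).ne'
  simp only [Function.comp_apply, inv_inv, zero_add, zero_mul, sub_zero, one_rpow, smul_eq_mul]
  rw [hfactor, rpow_sub_one ht.ne']
  field_simp

theorem weighted_add_le_of_frequently_sub_rpow_le {q a b c w₁ w₂ : ℝ} (hq : 0 < q)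
    (hw : w₁ + w₂ = 1)
    (h : ∃ᶠ t in atTop, (t - c) ^ q ≤ w₁ * (t - a) ^ q + w₂ * (t - b) ^ q) :
    w₁ * a + w₂ * b ≤ c := by
  have hright := ((tendsto_sub_rpow_sub_rpow_div_rpow_atTop q a).const_mul w₁).add
    ((tendsto_sub_rpow_sub_rpow_div_rpow_atTop q b).const_mul w₂)
  have hfreq : ∃ᶠ t in atTop, ((t - c) ^ q - t ^ q) / t ^ (q - 1) ≤
      w₁ * (((t - a) ^ q - t ^ q) / t ^ (q - 1)) +
        w₂ * (((t - b) ^ q - t ^ q) / t ^ (q - 1)) := by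
    refine (h.and_eventually (eventually_gt_atTop 0)).mono fun t ⟨hle, ht⟩ => ?_
    calc ((t - c) ^ q - t ^ q) / t ^ (q - 1)
        ≤ (w₁ * (t - a) ^ q + w₂ * (t - b) ^ q - t ^ q) / t ^ (q - 1) := by gcongr
      _ = (w₁ * (t - a) ^ q + w₂ * (t - b) ^ q - (w₁ + w₂) * t ^ q) / t ^ (q - 1) := by
        rw [hw, one_mul]
      _ = _ := by ring
  have hlim : -(q * c) ≤ w₁ * -(q * a) + w₂ * -(q * b) :=
    le_of_tendsto_of_tendsto_of_frequently
      (tendsto_sub_rpow_sub_rpow_div_rpow_atTop q c) hright hfreq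
  exact le_of_mul_le_mul_left (by linarith) hq

theorem Lfun_of_pos {s : ℝ} (α : ℝ) (hs : 0 < s) :
    Lfun α s = ((-(-log s) ^ (1 / α) : ℝ) : EReal) :=
  if_pos hs

theorem Lfun_of_nonpos {s : ℝ} (α : ℝ) (hs : s ≤ 0) : Lfun α s = ⊥ :=
  if_neg hs.not_gt

theorem weighted_Lfun_le_Lfun_iff {α a b c w₁ w₂ : ℝ} (ha : 0 < a) (hb : 0 < b) :
    (w₁ : EReal) * Lfun α a + (w₂ : EReal) * Lfun α b ≤ Lfun α c ↔
      0 < c ∧ (-log c) ^ (1 / α) ≤ w₁ * (-log a) ^ (1 / α) + w₂ * (-log b) ^ (1 / α) := by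
  rw [Lfun_of_pos α ha, Lfun_of_pos α hb, ← EReal.coe_mul, ← EReal.coe_mul, ← EReal.coe_add]
  rcases lt_or_ge 0 c with hc | hc
  · rw [Lfun_of_pos α hc, EReal.coe_le_coe_iff, and_iff_right hc, ← neg_le_neg_iff]
    ring_nf
  · simp only [Lfun_of_nonpos α hc, le_bot_iff, EReal.coe_ne_bot, hc.not_gt, false_and]

theorem geom_mean_le_of_frequently_weighted_Lfun_le {α a b c w₁ w₂ : ℝ} (hα : 0 < α)
    (ha : 0 < a) (hb : 0 < b) (hw : w₁ + w₂ = 1)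
    (h : ∃ᶠ κ : ℝ in 𝓝[>] 0,
      (w₁ : EReal) * Lfun α (κ * a) + (w₂ : EReal) * Lfun α (κ * b) ≤ Lfun α (κ * c)) :
    a ^ w₁ * b ^ w₂ ≤ c := by
  have hreal : ∃ᶠ κ : ℝ in 𝓝[>] 0, 0 < c ∧ (-log κ - log c) ^ (1 / α) ≤
      w₁ * (-log κ - log a) ^ (1 / α) + w₂ * (-log κ - log b) ^ (1 / α) := by
    refine (h.and_eventually self_mem_nhdsWithin).mono fun κ ⟨hle, (hκ : 0 < κ)⟩ => ?_
    obtain ⟨hκc, hpow⟩ := (weighted_Lfun_le_Lfun_iff (mul_pos hκ ha) (mul_pos hκ hb)).1 hle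
    have hc : 0 < c := pos_of_mul_pos_right hκc hκ.le
    have hlog {s : ℝ} (hs : 0 < s) : -log (κ * s) = -log κ - log s := by
      rw [log_mul hκ.ne' hs.ne', neg_add']
    rw [hlog ha, hlog hb, hlog hc] at hpow
    exact ⟨hc, hpow⟩
  obtain ⟨-, hc, -⟩ := hreal.exists
  have hneglog : Tendsto (fun κ : ℝ => -log κ) (𝓝[>] 0) atTop :=
    tendsto_neg_atBot_atTop.comp tendsto_log_nhdsGT_zero
  have hlogs : w₁ * log a + w₂ * log b ≤ log c :=
    weighted_add_le_of_frequently_sub_rpow_le (one_div_pos.2 hα) hw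
      (hneglog.frequently (hreal.mono fun _ => And.right))
  rw [← log_le_log_iff (by positivity) hc, log_mul (by positivity) (by positivity),
    log_rpow ha, log_rpow hb]
  exact hlogs

theorem rpow_mean_weighted_le_geom_mean_of_neg {ι : Type*} (s : Finset ι) (w z : ι → ℝ)
    (hw : ∀ i ∈ s, 0 ≤ w i) (hw' : ∑ i ∈ s, w i = 1) (hz : ∀ i ∈ s, 0 < z i) {p : ℝ}
    (hp : p < 0) : (∑ i ∈ s, w i * z i ^ p) ^ (1 / p) ≤ ∏ i ∈ s, z i ^ w i := by
  have hgeom : 0 < ∏ i ∈ s, z i ^ w i := Finset.prod_pos fun i hi => rpow_pos_of_pos (hz i hi) _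
  have hpow : (∏ i ∈ s, z i ^ w i) ^ p ≤ ∑ i ∈ s, w i * z i ^ p :=
    calc (∏ i ∈ s, z i ^ w i) ^ p = ∏ i ∈ s, (z i ^ p) ^ w i := by
          rw [← finsetProd_rpow s _ fun i hi => rpow_nonneg (hz i hi).le _]
          exact Finset.prod_congr rfl fun i hi => by
            rw [← rpow_mul (hz i hi).le, ← rpow_mul (hz i hi).le, mul_comm]
      _ ≤ ∑ i ∈ s, w i * z i ^ p :=
          geom_mean_le_arith_mean_weighted s w _ hw hw' fun i hi => rpow_nonneg (hz i hi).le p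
  rw [one_div, rpow_inv_le_iff_of_neg ((rpow_pos_of_pos hgeom p).trans_le hpow) hgeom hp]
  exact hpow

theorem rpow_mean2_weighted_le_geom_mean_of_neg {w₁ w₂ a b p : ℝ} (hw₁ : 0 ≤ w₁) (hw₂ : 0 ≤ w₂)
    (ha : 0 < a) (hb : 0 < b) (hw : w₁ + w₂ = 1) (hp : p < 0) :
    (w₁ * a ^ p + w₂ * b ^ p) ^ (1 / p) ≤ a ^ w₁ * b ^ w₂ := by
  simpa [Fin.sum_univ_two, Fin.prod_univ_two] using
    rpow_mean_weighted_le_geom_mean_of_neg Finset.univ ![w₁, w₂] ![a, b]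
      (by simp [Fin.forall_fin_two, hw₁, hw₂]) (by simpa using hw)
      (by simp [Fin.forall_fin_two, ha, hb]) hp

section Concavity

variable {E : Type*} [AddCommGroup E] [Module ℝ E] {U : E → ℝ}

/-- Log-concavity of a function on a real vector space, required only between points where the
function is positive. -/
def LogConcave (U : E → ℝ) : Prop :=
  ∀ x y : E, ∀ μ : ℝ, 0 ≤ μ → μ ≤ 1 → 0 < U x → 0 < U y →
    U x ^ (1 - μ) * U y ^ μ ≤ U ((1 - μ) • x + μ • y)

/-- `p`-concavity of a function on a real vector space for an exponent `p ≠ 0`, required only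
between points where the function is positive. At `p = 0`, where the paper's notion is
log-concavity, `1 / p` is a junk value. -/
def PowConcave (p : ℝ) (U : E → ℝ) : Prop :=
  ∀ x y : E, ∀ μ : ℝ, 0 ≤ μ → μ ≤ 1 → 0 < U x → 0 < U y →
    ((1 - μ) * U x ^ p + μ * U y ^ p) ^ (1 / p) ≤ U ((1 - μ) • x + μ • y)

theorem LogConcave.powConcave_of_neg (hU : LogConcave U) {p : ℝ} (hp : p < 0) :
    PowConcave p U := fun x y μ hμ₀ hμ₁ hx hy =>
  (rpow_mean2_weighted_le_geom_mean_of_neg (sub_nonneg.2 hμ₁) hμ₀ hx hy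
    (sub_add_cancel 1 μ) hp).trans (hU x y μ hμ₀ hμ₁ hx hy)

theorem logConcave_of_frequently_Lfun_le {α : ℝ} (hα : 0 < α)
    (hU : ∀ x y : E, ∀ μ : ℝ, 0 ≤ μ → μ ≤ 1 → ∃ᶠ κ : ℝ in 𝓝[>] 0,
      ((1 - μ : ℝ) : EReal) * Lfun α (κ * U x) + (μ : EReal) * Lfun α (κ * U y) ≤
        Lfun α (κ * U ((1 - μ) • x + μ • y))) :
    LogConcave U := fun x y μ hμ₀ hμ₁ hx hy =>
  geom_mean_le_of_frequently_weighted_Lfun_le hα hx hy (sub_add_cancel 1 μ) (hU x y μ hμ₀ hμ₁)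

theorem alpha_logconcave_implies_pconcave_general {α : ℝ} (hα : 0 < α)
    (hU : ∀ x y : E, ∀ μ : ℝ, 0 ≤ μ → μ ≤ 1 → ∃ᶠ κ : ℝ in 𝓝[>] 0,
      ((1 - μ : ℝ) : EReal) * Lfun α (κ * U x) + (μ : EReal) * Lfun α (κ * U y) ≤
        Lfun α (κ * U ((1 - μ) • x + μ • y)))
    {p : ℝ} (hp : p < 0) : PowConcave p U :=
  (logConcave_of_frequently_Lfun_le hα hU).powConcave_of_neg hp

end Concavity

theorem AlphaLogConcave.frequently_Lfun_le {N : ℕ} {α : ℝ} {U : EuclideanSpace ℝ (Fin N) → ℝ}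
    (hU : AlphaLogConcave α U) (x y : EuclideanSpace ℝ (Fin N)) (μ : ℝ) (hμ₀ : 0 ≤ μ)
    (hμ₁ : μ ≤ 1) :
    ∃ᶠ κ : ℝ in 𝓝[>] 0,
      ((1 - μ : ℝ) : EReal) * Lfun α (κ * U x) + (μ : EReal) * Lfun α (κ * U y) ≤
        Lfun α (κ * U ((1 - μ) • x + μ • y)) := by
  obtain ⟨κ₀, hκ₀, hconc⟩ := hU
  refine Eventually.frequently ?_
  filter_upwards [Ioc_mem_nhdsGT hκ₀] with κ ⟨hκ, hκ_le⟩
  exact hconc κ hκ hκ_le x y μ hμ₀ hμ₁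

/-- Lemma 2.2 (ii): If `u` is `α`-logconcave in a convex set `Ω` for some
`α > 0`, then `u` is `p`-concave in `Ω` for every `p < 0`. -/
theorem alpha_logconcave_implies_pconcave
    (N : ℕ) (Ω : Set (EuclideanSpace ℝ (Fin N))) (hΩ : Convex ℝ Ω)
    (u : EuclideanSpace ℝ (Fin N) → ℝ)
    (h0 : ∀ x ∈ Ω, 0 ≤ u x) (hbd : ∃ M : ℝ, ∀ x ∈ Ω, u x ≤ M)
    (α : ℝ) (hα : 0 < α) (hconc : AlphaLogConcave α (zeroExt Ω u)) :
    ∀ p : ℝ, p < 0 → ∀ x y : EuclideanSpace ℝ (Fin N), ∀ μ : ℝ, 0 ≤ μ → μ ≤ 1 →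
      0 < zeroExt Ω u x * zeroExt Ω u y →
      ((1 - μ) * zeroExt Ω u x ^ p + μ * zeroExt Ω u y ^ p) ^ (1 / p) ≤
        zeroExt Ω u ((1 - μ) • x + μ • y) := by
  intro p hp x y μ hμ₀ hμ₁ hxy
  have hnonneg (z) : 0 ≤ zeroExt Ω u z := Set.indicator_nonneg h0 z
  exact alpha_logconcave_implies_pconcave_general hα hconc.frequently_Lfun_le hp x y μ hμ₀ hμ₁
    (pos_of_mul_pos_left hxy (hnonneg y)) (pos_of_mul_pos_right hxy (hnonneg x))
end

section
/- Let N ≥ 1 and t > 0. Then the class C[L₂] of 2-logconcave functions in ℝ^N equals the intersection, over all admissible functions F such that the Gauss kernel G(·,t) is F-concave in ℝ^N, of the classes C[F] of F-concave functions in ℝ^N. -/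
open MeasureTheory Real

/-! The Gauss kernel is, up to a multiplicative constant and a dilation, the image of `‖x‖` under
`r ↦ exp (-r ^ 2)`, the inverse of `-L₂`. Hence, restricting to a ray, `F`-concavity of the kernel
says that `F` is a concave function of `L₂` after rescaling, and being monotone such an `F` turns
`L₂`-concave functions into `F`-concave ones. Conversely `L₂` is one of the competing `F`, since
`-L₂ (κ G(x, t))` is the norm `√(d ^ 2 + ‖x‖ ^ 2 / (4 * t))` of a point of `ℝ × ℝ^N` depending
affinely on `x`. Nothing here is special to the exponent `2`: every `α ≥ 1` works.
-/

open Set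

section Concavity

variable {E : Type*}

namespace ERealConcaveOn

lemma of_ne_bot [AddCommGroup E] [Module ℝ E] {f : E → EReal}
    (h : ∀ x y : E, ∀ μ : ℝ, 0 < μ → μ < 1 → f x ≠ ⊥ → f y ≠ ⊥ →
      ((1 - μ : ℝ) : EReal) * f x + (μ : EReal) * f y ≤ f ((1 - μ) • x + μ • y)) :
    ERealConcaveOn f := by
  intro x y μ hμ₀ hμ₁
  rcases hμ₀.eq_or_lt with rfl | hμ₀
  · simp
  rcases hμ₁.eq_or_lt with rfl | hμ₁
  · simp
  by_cases hx : f x = ⊥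
  · rw [hx, EReal.coe_mul_bot_of_pos (sub_pos.2 hμ₁), EReal.bot_add]
    exact bot_le
  by_cases hy : f y = ⊥
  · rw [hy, EReal.coe_mul_bot_of_pos hμ₀, EReal.add_bot]
    exact bot_le
  exact h x y μ hμ₀ hμ₁ hx hy

lemma of_concaveOn [AddCommGroup E] [Module ℝ E] {f : E → ℝ} (hf : ConcaveOn ℝ univ f) :
    ERealConcaveOn fun x => (f x : EReal) := fun x y μ hμ₀ hμ₁ =>
  EReal.coe_le_coe_iff.2 <|
    hf.2 (mem_univ x) (mem_univ y) (sub_nonneg.2 hμ₁) hμ₀ (sub_add_cancel 1 μ)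

lemma concaveOnSet_Ici_of_radial [NormedAddCommGroup E] [NormedSpace ℝ E] [Nontrivial E]
    {f : ℝ → EReal} {c : ℝ} (hc : 0 < c) (hf : ERealConcaveOn fun x : E => f (c * ‖x‖)) :
    ERealConcaveOnSet (Ici 0) f := by
  intro a ha b hb μ hμ₀ hμ₁
  obtain ⟨e, he⟩ := exists_norm_eq E (inv_nonneg.2 hc.le)
  have radius : ∀ r : ℝ, 0 ≤ r → c * ‖r • e‖ = r := fun r hr => by
    rw [norm_smul, he, Real.norm_of_nonneg hr]
    field_simp
  have hab : 0 ≤ (1 - μ) • a + μ • b :=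
    (convex_Ici 0) ha hb (sub_nonneg.2 hμ₁) hμ₀ (sub_add_cancel 1 μ)
  have combination : (1 - μ) • a • e + μ • b • e = ((1 - μ) • a + μ • b) • e := by
    rw [add_smul, smul_assoc, smul_assoc]
  simpa only [combination, radius a ha, radius b hb, radius _ hab]
    using hf (a • e) (b • e) μ hμ₀ hμ₁

end ERealConcaveOn

lemma convexOn_rpow_add_norm_rpow [NormedAddCommGroup E] [NormedSpace ℝ E] {α b : ℝ}
    (hα : 1 ≤ α) (hb : 0 ≤ b) : ConvexOn ℝ univ fun x : E => (b + ‖x‖ ^ α) ^ (1 / α) := by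
  have hα₀ : 0 < α := one_pos.trans_le hα
  have : Fact (1 ≤ ENNReal.ofReal α) := ⟨ENNReal.one_le_ofReal.2 hα⟩
  -- The function is the `ℓ^α` norm of the point `(d, x)`, where `d ^ α = b`.
  let point (x : E) : WithLp (ENNReal.ofReal α) (ℝ × E) := WithLp.toLp _ (b ^ α⁻¹, x)
  have norm_point : ∀ x, ‖point x‖ = (b + ‖x‖ ^ α) ^ (1 / α) := fun x => by
    have hp : 0 < (ENNReal.ofReal α).toReal := by rwa [ENNReal.toReal_ofReal hα₀.le]
    simp only [point, WithLp.prod_norm_eq_add hp, WithLp.toLp_fst, WithLp.toLp_snd,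
      ENNReal.toReal_ofReal hα₀.le, Real.norm_of_nonneg (Real.rpow_nonneg hb α⁻¹),
      Real.rpow_inv_rpow hb hα₀.ne']
  refine ⟨convex_univ, fun x _ y _ p q hp hq hpq => ?_⟩
  have point_combination : point (p • x + q • y) = p • point x + q • point y := by
    simp only [point, ← WithLp.toLp_smul, ← WithLp.toLp_add, Prod.smul_mk, Prod.mk_add_mk,
      ← add_smul, hpq, one_smul]
  simpa only [← norm_point, point_combination]
    using convexOn_univ_norm.2 (mem_univ (point x)) (mem_univ (point y)) hp hq hpq

end Concavity

section LogDepth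

/-- The real-valued function `-L_α`, meaningful on `(0, 1]`; the concavity inequality for `L_α` is
a comparison of depths. -/
noncomputable def logDepth (α s : ℝ) : ℝ :=
  (-Real.log s) ^ (1 / α)

/-- The stretched exponential `exp (-r ^ α)`, meaningful for `r ≥ 0`, where it inverts `logDepth α`.
It is the radial profile of the kernels generalizing the Gauss kernel, which has `α = 2`. -/
noncomputable def stretchedExp (α r : ℝ) : ℝ :=
  Real.exp (-r ^ α)

variable {α s r : ℝ}

lemma stretchedExp_pos : 0 < stretchedExp α r :=
  Real.exp_pos _

lemma stretchedExp_zero (hα : α ≠ 0) : stretchedExp α 0 = 1 := by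
  simp [stretchedExp, Real.zero_rpow hα]

lemma stretchedExp_le_one (hr : 0 ≤ r) : stretchedExp α r ≤ 1 :=
  Real.exp_le_one_iff.2 (neg_nonpos.2 (Real.rpow_nonneg hr α))

lemma stretchedExp_antitoneOn (hα : 0 ≤ α) : AntitoneOn (stretchedExp α) (Ici 0) :=
  fun _ ha _ _ hab => Real.exp_le_exp.2 (neg_le_neg (Real.rpow_le_rpow ha hab hα))

lemma neg_log_nonneg_of_mem_Ioc (hs : s ∈ Ioc 0 1) : 0 ≤ -Real.log s :=
  neg_nonneg.2 (Real.log_nonpos hs.1.le hs.2)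

lemma logDepth_nonneg (hs : s ∈ Ioc 0 1) : 0 ≤ logDepth α s :=
  Real.rpow_nonneg (neg_log_nonneg_of_mem_Ioc hs) _

lemma logDepth_strictAntiOn (hα : 0 < α) : StrictAntiOn (logDepth α) (Ioc 0 1) :=
  fun _ ha _ hb hab => Real.rpow_lt_rpow (neg_log_nonneg_of_mem_Ioc hb)
    (neg_lt_neg (Real.log_lt_log ha.1 hab)) (one_div_pos.2 hα)

lemma logDepth_continuousOn (hα : 0 ≤ α) : ContinuousOn (logDepth α) (Ioc 0 1) :=
  (Real.continuousOn_log.mono fun _ hs => hs.1.ne').neg.rpow_const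
    fun _ _ => Or.inr (one_div_nonneg.2 hα)

lemma stretchedExp_logDepth (hα : α ≠ 0) (hs : s ∈ Ioc 0 1) :
    stretchedExp α (logDepth α s) = s := by
  rw [stretchedExp, logDepth, one_div,
    Real.rpow_inv_rpow (neg_log_nonneg_of_mem_Ioc hs) hα, neg_neg, Real.exp_log hs.1]

lemma stretchedExp_le_of_logDepth_le (hα : 0 < α) (hs : s ∈ Ioc 0 1) (h : logDepth α s ≤ r) :
    stretchedExp α r ≤ s := by
  have hd := logDepth_nonneg (α := α) hs
  simpa only [stretchedExp_logDepth hα.ne' hs]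
    using stretchedExp_antitoneOn hα.le hd (hd.trans h) h

lemma logDepth_const_mul_stretchedExp {k : ℝ} (hk : 0 < k) :
    logDepth α (k * stretchedExp α r) = (-Real.log k + r ^ α) ^ (1 / α) := by
  rw [logDepth, stretchedExp, Real.log_mul hk.ne' (Real.exp_pos _).ne', Real.log_exp, neg_add,
    neg_neg]

end LogDepth

section Lfun

variable {α s : ℝ}

lemma lfun_of_pos (hs : 0 < s) : Lfun α s = ((-logDepth α s : ℝ) : EReal) :=
  if_pos hs

lemma lfun_eq_bot_iff : Lfun α s = ⊥ ↔ s ≤ 0 := by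
  by_cases hs : 0 < s
  · simp [lfun_of_pos hs, hs]
  · simp [Lfun, hs, not_lt.1 hs]

lemma admissible_lfun (hα : 0 < α) : Admissible (Lfun α) := by
  refine ⟨fun a ha b hb hab => ?_, ?_, lfun_eq_bot_iff.2 le_rfl, fun s hs _ => ?_⟩
  · rw [lfun_of_pos ha.1, lfun_of_pos hb.1, EReal.coe_lt_coe_iff, neg_lt_neg_iff]
    exact logDepth_strictAntiOn hα ha hb hab
  · exact (continuous_coe_real_ereal.comp_continuousOn (logDepth_continuousOn hα.le).neg).congr
      fun s hs => lfun_of_pos hs.1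
  · exact lfun_eq_bot_iff.not.2 hs.not_ge

variable {E : Type*} [AddCommGroup E] [Module ℝ E] {v : E → ℝ}

lemma ERealConcaveOn.logDepth_combination_le (hv : ERealConcaveOn fun x => Lfun α (v x)) {x y : E}
    (hx : 0 < v x) (hy : 0 < v y) {μ : ℝ} (hμ₀ : 0 ≤ μ) (hμ₁ : μ ≤ 1) :
    0 < v ((1 - μ) • x + μ • y) ∧
      logDepth α (v ((1 - μ) • x + μ • y)) ≤
        (1 - μ) * logDepth α (v x) + μ * logDepth α (v y) := by
  have hxy := hv x y μ hμ₀ hμ₁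
  simp only [lfun_of_pos hx, lfun_of_pos hy, ← EReal.coe_mul, ← EReal.coe_add] at hxy
  have hz : 0 < v ((1 - μ) • x + μ • y) := by
    by_contra! hz
    rw [lfun_eq_bot_iff.2 hz] at hxy
    exact EReal.coe_ne_bot _ (le_bot_iff.1 hxy)
  rw [lfun_of_pos hz, EReal.coe_le_coe_iff] at hxy
  exact ⟨hz, by linarith⟩

lemma ERealConcaveOn.comp_of_lfun {F : ℝ → EReal} {k : ℝ} (hα : 0 < α)
    (hF : MonotoneOn F (Ioc 0 1)) (hF₀ : F 0 = ⊥) (hk : k ∈ Ioc 0 1)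
    (hFk : ERealConcaveOnSet (Ici 0) fun r => F (k * stretchedExp α r))
    (hv : ERealConcaveOn fun x => Lfun α (v x)) (hv01 : ∀ x, v x ∈ Icc 0 1) :
    ERealConcaveOn fun x => F (k * v x) := by
  have mem_Ioc : ∀ {s : ℝ}, 0 < s → s ≤ 1 → k * s ∈ Ioc 0 1 := fun hs₀ hs₁ =>
    ⟨mul_pos hk.1 hs₀, mul_le_one₀ hk.2 hs₀.le hs₁⟩
  have pos_of_ne_bot : ∀ x, F (k * v x) ≠ ⊥ → 0 < v x := fun x hx =>
    (hv01 x).1.lt_of_ne fun h => hx (by rw [← h, mul_zero, hF₀])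
  refine .of_ne_bot fun x y μ hμ₀ hμ₁ hx hy => ?_
  replace hx : v x ∈ Ioc 0 1 := ⟨pos_of_ne_bot x hx, (hv01 x).2⟩
  replace hy : v y ∈ Ioc 0 1 := ⟨pos_of_ne_bot y hy, (hv01 y).2⟩
  obtain ⟨hz, depth_le⟩ := hv.logDepth_combination_le hx.1 hy.1 hμ₀.le hμ₁.le
  set z := (1 - μ) • x + μ • y
  set r := (1 - μ) * logDepth α (v x) + μ * logDepth α (v y) with hr
  have exp_le : stretchedExp α r ≤ v z :=
    stretchedExp_le_of_logDepth_le hα ⟨hz, (hv01 z).2⟩ depth_le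
  calc ((1 - μ : ℝ) : EReal) * F (k * v x) + (μ : EReal) * F (k * v y)
      ≤ F (k * stretchedExp α r) := by
        simpa only [stretchedExp_logDepth hα.ne' hx, stretchedExp_logDepth hα.ne' hy,
          smul_eq_mul, hr]
          using hFk (logDepth α (v x)) (logDepth_nonneg hx) (logDepth α (v y))
            (logDepth_nonneg hy) μ hμ₀.le hμ₁.le
    _ ≤ F (k * v z) :=
        hF (mem_Ioc stretchedExp_pos (exp_le.trans (hv01 z).2)) (mem_Ioc hz (hv01 z).2)
          (mul_le_mul_of_nonneg_left exp_le hk.1.le)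

end Lfun

section RadialKernel

variable {N : ℕ} {α A c : ℝ}

lemma erealConcaveOn_lfun_stretchedExp_norm {E : Type*} [NormedAddCommGroup E] [NormedSpace ℝ E]
    {k : ℝ} (hα : 1 ≤ α) (hc : 0 ≤ c) (hk : k ∈ Ioc 0 1) :
    ERealConcaveOn fun x : E => Lfun α (k * stretchedExp α (c * ‖x‖)) := by
  have depth_convex : ConvexOn ℝ univ fun x : E => logDepth α (k * stretchedExp α (c * ‖x‖)) := by
    have := (convexOn_rpow_add_norm_rpow (E := E) hα (neg_log_nonneg_of_mem_Ioc hk)).comp_linearMap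
      (c • LinearMap.id)
    simpa only [logDepth_const_mul_stretchedExp hk.1, preimage_univ, Function.comp_def,
      LinearMap.smul_apply, LinearMap.id_apply, norm_smul, Real.norm_of_nonneg hc] using this
  simpa only [lfun_of_pos (mul_pos hk.1 stretchedExp_pos), Pi.neg_apply]
    using ERealConcaveOn.of_concaveOn depth_convex.neg

lemma fConcave_lfun_stretchedExp_norm (hα : 1 ≤ α) (hA : 0 < A) (hc : 0 ≤ c) :
    FConcave (Lfun α) fun x : EuclideanSpace ℝ (Fin N) => A * stretchedExp α (c * ‖x‖) := by
  refine ⟨A⁻¹, inv_pos.2 hA, fun κ hκ hκA => ?_⟩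
  have hk : κ * A ∈ Ioc 0 1 := ⟨mul_pos hκ hA, (le_inv_mul_iff₀' hA).1 (by simpa using hκA)⟩
  simp only [← mul_assoc κ A]
  exact ⟨fun x => ⟨(mul_pos hk.1 stretchedExp_pos).le,
    mul_le_one₀ hk.2 stretchedExp_pos.le (stretchedExp_le_one (by positivity))⟩,
    erealConcaveOn_lfun_stretchedExp_norm hα hc hk⟩

lemma FConcave.exists_erealConcaveOnSet_stretchedExp [NeZero N] {F : ℝ → EReal} (hα : α ≠ 0)
    (hA : 0 < A) (hc : 0 < c)
    (h : FConcave F fun x : EuclideanSpace ℝ (Fin N) => A * stretchedExp α (c * ‖x‖)) :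
    ∃ k ∈ Ioc (0 : ℝ) 1, ERealConcaveOnSet (Ici 0) fun r => F (k * stretchedExp α r) := by
  obtain ⟨κ, hκ, h⟩ := h
  obtain ⟨hle, hconcave⟩ := h κ hκ le_rfl
  have hk : κ * A ≤ 1 := by simpa [stretchedExp_zero hα] using (hle 0).2
  simp only [← mul_assoc κ A] at hconcave
  exact ⟨κ * A, ⟨mul_pos hκ hA, hk⟩, ERealConcaveOn.concaveOnSet_Ici_of_radial hc hconcave⟩

lemma FConcave.of_lfun {F : ℝ → EReal} {k : ℝ} {u : EuclideanSpace ℝ (Fin N) → ℝ} (hα : 0 < α)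
    (hF : MonotoneOn F (Ioc 0 1)) (hF₀ : F 0 = ⊥) (hk : k ∈ Ioc 0 1)
    (hFk : ERealConcaveOnSet (Ici 0) fun r => F (k * stretchedExp α r))
    (hu : FConcave (Lfun α) u) : FConcave F u := by
  obtain ⟨κ₀, hκ₀, hu⟩ := hu
  refine ⟨k * κ₀, mul_pos hk.1 hκ₀, fun κ hκ hκ_le => ?_⟩
  obtain ⟨l, rfl⟩ : ∃ l, κ = k * l := ⟨κ / k, (mul_div_cancel₀ κ hk.1.ne').symm⟩
  obtain ⟨hlu, hconcave⟩ :=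
    hu l (pos_of_mul_pos_right hκ hk.1.le) (le_of_mul_le_mul_left hκ_le hk.1)
  simp only [mul_assoc k l]
  exact ⟨fun x => ⟨mul_nonneg hk.1.le (hlu x).1, mul_le_one₀ hk.2 (hlu x).1 (hlu x).2⟩,
    ERealConcaveOn.comp_of_lfun hα hF hF₀ hk hFk hconcave hlu⟩

end RadialKernel

lemma gauss_eq_const_mul_stretchedExp {N : ℕ} (x : EuclideanSpace ℝ (Fin N)) {t : ℝ}
    (ht : 0 ≤ t) :
    gauss N x t =
      (4 * Real.pi * t) ^ (-(N : ℝ) / 2) * stretchedExp 2 ((2 * √t)⁻¹ * ‖x‖) := by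
  rw [gauss, stretchedExp, Real.rpow_two, mul_pow, inv_pow, mul_pow, Real.sq_sqrt ht]
  ring_nf

theorem two_logconcave_class_eq_iInter_general {N : ℕ} [NeZero N] {α A c : ℝ} (hα : 1 ≤ α)
    (hA : 0 < A) (hc : 0 < c) :
    {u : EuclideanSpace ℝ (Fin N) → ℝ | FConcave (Lfun α) u} =
      ⋂ F ∈ {F : ℝ → EReal | Admissible F ∧
          FConcave F fun x : EuclideanSpace ℝ (Fin N) => A * stretchedExp α (c * ‖x‖)},
        {u : EuclideanSpace ℝ (Fin N) → ℝ | FConcave F u} := by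
  have hα₀ : 0 < α := one_pos.trans_le hα
  refine Subset.antisymm (subset_iInter₂ fun F ⟨hF, hkernel⟩ u hu => ?_) ?_
  · obtain ⟨k, hk, hFk⟩ := hkernel.exists_erealConcaveOnSet_stretchedExp hα₀.ne' hA hc
    exact FConcave.of_lfun hα₀ hF.1.monotoneOn hF.2.2.1 hk hFk hu
  · exact biInter_subset_of_mem
      ⟨admissible_lfun hα₀, fConcave_lfun_stretchedExp_norm hα hA hc.le⟩

/-- Lemma 2.3, second part: `C[L₂]` equals the intersection of the classes
`C[F]` over all admissible `F` such that `G(·,t)` is `F`-concave. -/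
theorem two_logconcave_class_eq_iInter
    (N : ℕ) (hN : 1 ≤ N) (t : ℝ) (ht : 0 < t) :
    {u : EuclideanSpace ℝ (Fin N) → ℝ | FConcave (Lfun 2) u} =
      ⋂ F ∈ {F : ℝ → EReal | Admissible F ∧ FConcave F (fun x => gauss N x t)},
        {u : EuclideanSpace ℝ (Fin N) → ℝ | FConcave F u} := by
  have : NeZero N := ⟨Nat.one_le_iff_ne_zero.1 hN⟩
  simpa only [gauss_eq_const_mul_stretchedExp _ ht.le] using
    two_logconcave_class_eq_iInter_general one_le_two (by positivity) (by positivity)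
end

section
/- Let N ≥ 1 and 0 < α < 1, and define u : ℝ^N → ℝ by u(x) := exp(-|x|^α). Then the function x ↦ L_α(u(x)) = -|x| is concave on ℝ^N, but for every κ with 0 < κ < 1 the function x ↦ L_α(κ u(x)) = -(-log κ + |x|^α)^{1/α} is NOT concave on ℝ^N. Consequently, for 0 < α < 1, concavity of L_α(κu) for some κ > 0 does not imply concavity of L_α(κ'u) for all smaller κ' > 0. -/
/-!
Along a ray from the origin, with `c = -log κ > 0`, Bernoulli's inequality shows that
`(c + |tv|^α)^{1/α}` exceeds its value at `t = 0` by at least a positive multiple of `t^α`. Since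
`α < 1`, its slope at `t = 0⁺` is infinite, whereas a convex function on `[0,1]` lies below its
chord.
-/

open MeasureTheory Real

open Filter Topology

theorem eventually_mul_lt_mul_rpow {a α : ℝ} (ha : 0 < a) (hα : α < 1) (M : ℝ) :
    ∀ᶠ t in 𝓝[>] 0, M * t < a * t ^ α := by
  have slope_tendsto : Tendsto (fun t : ℝ => t ^ (α - 1)) (𝓝[>] 0) atTop :=
    tendsto_rpow_neg_nhdsGT_zero (sub_neg.2 hα)
  filter_upwards [slope_tendsto.eventually_gt_atTop (M / a), self_mem_nhdsWithin] with t hM ht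
  have ht₀ : t ≠ 0 := ne_of_gt ht
  calc
    M * t < t ^ (α - 1) * a * t := mul_lt_mul_of_pos_right ((div_lt_iff₀ ha).1 hM) ht
    _ = a * t ^ α := by rw [rpow_sub_one ht₀]; field_simp

theorem not_convexOn_of_add_mul_rpow_le {E : Type*} [AddCommGroup E] [Module ℝ E] {s : Set E}
    {f : E → ℝ} {x y : E} {a α : ℝ} (hx : x ∈ s) (hy : y ∈ s) (ha : 0 < a) (hα : α < 1)
    (hf : ∀ t ∈ Set.Ioo (0 : ℝ) 1, f x + a * t ^ α ≤ f ((1 - t) • x + t • y)) :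
    ¬ ConvexOn ℝ s f := by
  intro hconv
  obtain ⟨t, chord_lt, ht⟩ :=
    ((eventually_mul_lt_mul_rpow ha hα (f y - f x)).and (Ioo_mem_nhdsGT one_pos)).exists
  have le_chord : f ((1 - t) • x + t • y) ≤ (1 - t) * f x + t * f y :=
    hconv.2 hx hy (sub_nonneg.2 ht.2.le) ht.1.le (sub_add_cancel 1 t)
  linarith [hf t ht]

theorem rpow_add_mul_rpow_sub_one_mul_le_add_rpow {c y p : ℝ} (hc : 0 < c) (hy : -c ≤ y)
    (hp : 1 ≤ p) :
    c ^ p + p * c ^ (p - 1) * y ≤ (c + y) ^ p := by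
  have neg_one_le : -1 ≤ y / c := by rwa [le_div_iff₀ hc, neg_one_mul]
  calc
    c ^ p + p * c ^ (p - 1) * y = c ^ p * (1 + p * (y / c)) := by
      rw [rpow_sub_one hc.ne']; ring
    _ ≤ c ^ p * (1 + y / c) ^ p := by
      gcongr
      exact one_add_mul_self_le_rpow_one_add neg_one_le hp
    _ = (c + y) ^ p := by
      rw [← mul_rpow hc.le (by linarith), mul_one_add, mul_div_cancel₀ y hc.ne']

theorem not_convexOn_add_norm_rpow_rpow {E : Type*} [SeminormedAddCommGroup E] [NormedSpace ℝ E]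
    {s : Set E} {v : E} {c α p : ℝ} (h0 : 0 ∈ s) (hv : v ∈ s) (hv₀ : ‖v‖ ≠ 0) (hc : 0 < c)
    (hα₀ : 0 < α) (hα₁ : α < 1) (hp : 1 ≤ p) :
    ¬ ConvexOn ℝ s fun x => (c + ‖x‖ ^ α) ^ p := by
  have norm_pos : 0 < ‖v‖ := (norm_nonneg v).lt_of_ne' hv₀
  have coeff_pos : 0 < p * c ^ (p - 1) * ‖v‖ ^ α := by positivity
  refine not_convexOn_of_add_mul_rpow_le h0 hv coeff_pos hα₁ fun t ht => ?_
  have norm_rpow : ‖(1 - t) • (0 : E) + t • v‖ ^ α = t ^ α * ‖v‖ ^ α := by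
    rw [smul_zero, zero_add, norm_smul_of_nonneg ht.1.le, mul_rpow ht.1.le norm_pos.le]
  have increment_nonneg : 0 ≤ t ^ α * ‖v‖ ^ α :=
    mul_nonneg (rpow_nonneg ht.1.le α) (rpow_nonneg norm_pos.le α)
  calc
    (c + ‖(0 : E)‖ ^ α) ^ p + p * c ^ (p - 1) * ‖v‖ ^ α * t ^ α
        = c ^ p + p * c ^ (p - 1) * (t ^ α * ‖v‖ ^ α) := by
      rw [norm_zero, zero_rpow hα₀.ne', add_zero]; ring
    _ ≤ (c + t ^ α * ‖v‖ ^ α) ^ p :=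
      rpow_add_mul_rpow_sub_one_mul_le_add_rpow hc (by linarith) hp
    _ = (c + ‖(1 - t) • (0 : E) + t • v‖ ^ α) ^ p := by rw [norm_rpow]

theorem neg_log_mul_exp_neg {κ : ℝ} (hκ : κ ≠ 0) (y : ℝ) :
    -log (κ * exp (-y)) = -log κ + y := by
  rw [log_mul hκ (exp_ne_zero _), log_exp, neg_add, neg_neg]

theorem alpha_logconcavity_fails_for_small_alpha_general {E : Type*} [SeminormedAddCommGroup E]
    [NormedSpace ℝ E] [NontrivialTopology E] {α : ℝ} (hα₀ : 0 < α) (hα₁ : α < 1) :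
    (∀ x : E, -(-log (exp (-‖x‖ ^ α))) ^ (1 / α) = -‖x‖) ∧
    ConcaveOn ℝ Set.univ (fun x : E => -‖x‖) ∧
    ∀ κ : ℝ, 0 < κ → κ < 1 →
      (∀ x : E, -(-log (κ * exp (-‖x‖ ^ α))) ^ (1 / α) = -(-log κ + ‖x‖ ^ α) ^ (1 / α)) ∧
      ¬ ConcaveOn ℝ Set.univ (fun x : E => -(-log κ + ‖x‖ ^ α) ^ (1 / α)) := by
  refine ⟨fun x => ?_, convexOn_univ_norm.neg, fun κ hκ₀ hκ₁ => ⟨fun x => ?_, fun hconc => ?_⟩⟩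
  · rw [log_exp, neg_neg, one_div, rpow_rpow_inv (norm_nonneg x) hα₀.ne']
  · rw [neg_log_mul_exp_neg hκ₀.ne']
  · obtain ⟨v, hv⟩ := exists_norm_ne_zero E
    exact not_convexOn_add_norm_rpow_rpow (Set.mem_univ 0) (Set.mem_univ v) hv
      (neg_pos.2 (log_neg hκ₀ hκ₁)) hα₀ hα₁ (one_le_one_div hα₀ hα₁.le)
      (neg_concaveOn_iff.1 hconc)

/-- Remark 2.1 (ii): For `0 < α < 1` and `u(x) = exp(-|x|^α)`, the function
`L_α(u) = -|x|` is concave on `ℝ^N`, but for every `0 < κ < 1` the function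
`L_α(κu) = -(-log κ + |x|^α)^{1/α}` is not concave on `ℝ^N`. -/
theorem alpha_logconcavity_fails_for_small_alpha
    (N : ℕ) (hN : 1 ≤ N) (α : ℝ) (hα₀ : 0 < α) (hα₁ : α < 1) :
    (∀ x : EuclideanSpace ℝ (Fin N),
        -(-Real.log (Real.exp (-‖x‖ ^ α))) ^ (1 / α) = -‖x‖) ∧
    ConcaveOn ℝ Set.univ (fun x : EuclideanSpace ℝ (Fin N) => -‖x‖) ∧
    ∀ κ : ℝ, 0 < κ → κ < 1 →
      (∀ x : EuclideanSpace ℝ (Fin N),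
          -(-Real.log (κ * Real.exp (-‖x‖ ^ α))) ^ (1 / α) =
            -(-Real.log κ + ‖x‖ ^ α) ^ (1 / α)) ∧
      ¬ ConcaveOn ℝ Set.univ
          (fun x : EuclideanSpace ℝ (Fin N) =>
            -(-Real.log κ + ‖x‖ ^ α) ^ (1 / α)) := by
  have : Nonempty (Fin N) := ⟨⟨0, hN⟩⟩
  exact alpha_logconcavity_fails_for_small_alpha_general hα₀ hα₁
end

section
/- Let 0 < α ≤ β, let Ω be a convex set in ℝ^N, and let u be a bounded nonnegative function on Ω. If u is β-logconcave in Ω, then u is α-logconcave in Ω. -/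
open MeasureTheory Real

/-!
A function equal to a real function `g` on `S` and to `-∞` off `S` is concave exactly when `g` is
concave on `S` (in particular `S` is convex). Hence `x ↦ L_α(v x)` is concave exactly when
`(-log v)^{1/α}` is convex on `{v > 0}`, a set that does not depend on `α`. If `v ≤ 1` and
`α ≤ β`, then `(-log v)^{1/α}` is the composition of `(-log v)^{1/β} ≥ 0` with `t ↦ t^{β/α}`, which
is convex and increasing on `[0, ∞)`. Boundedness gives `v = κ u ≤ 1` for all small `κ`.
-/

section Concavity

variable {E : Type*} [AddCommGroup E] [Module ℝ E]

theorem convexOn_rpow_of_nonneg {s : Set E} {f : E → ℝ} {p : ℝ} (hf : ConvexOn ℝ s f)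
    (hf₀ : ∀ x ∈ s, 0 ≤ f x) (hp : 1 ≤ p) : ConvexOn ℝ s fun x => f x ^ p := by
  refine ⟨hf.1, fun x hx y hy a b ha hb hab => ?_⟩
  calc f (a • x + b • y) ^ p
      ≤ (a • f x + b • f y) ^ p :=
        rpow_le_rpow (hf₀ _ (hf.1 hx hy ha hb hab)) (hf.2 hx hy ha hb hab)
          (zero_le_one.trans hp)
    _ ≤ a • f x ^ p + b • f y ^ p :=
        (convexOn_rpow hp).2 (hf₀ x hx) (hf₀ y hy) ha hb hab

theorem convexOn_rpow_of_le {s : Set E} {f : E → ℝ} {p q : ℝ} (hf₀ : ∀ x ∈ s, 0 ≤ f x)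
    (hp : 0 < p) (hpq : p ≤ q) (hf : ConvexOn ℝ s fun x => f x ^ p) :
    ConvexOn ℝ s fun x => f x ^ q := by
  have hpow : ConvexOn ℝ s fun x => (f x ^ p) ^ (q / p) :=
    convexOn_rpow_of_nonneg hf (fun x hx => rpow_nonneg (hf₀ x hx) p) ((one_le_div hp).2 hpq)
  exact hpow.congr fun x hx => by
    simp only [← rpow_mul (hf₀ x hx), mul_div_cancel₀ q hp.ne']

theorem erealConcaveOn_ite_bot_iff {p : E → Prop} [DecidablePred p] {g : E → ℝ} :
    ERealConcaveOn (fun x => if p x then (g x : EReal) else ⊥) ↔ ConcaveOn ℝ {x | p x} g := by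
  constructor
  · intro h
    have combo : ∀ ⦃x⦄, p x → ∀ ⦃y⦄, p y → ∀ ⦃a b : ℝ⦄, 0 ≤ a → 0 ≤ b → a + b = 1 →
        p (a • x + b • y) ∧ a • g x + b • g y ≤ g (a • x + b • y) := by
      intro x hx y hy a b ha hb hab
      obtain rfl : a = 1 - b := eq_sub_of_add_eq hab
      have hle := h x y b hb (sub_nonneg.1 ha)
      simp only [if_pos hx, if_pos hy, ← EReal.coe_mul, ← EReal.coe_add] at hle
      split_ifs at hle with hmem
      · exact ⟨hmem, EReal.coe_le_coe_iff.1 hle⟩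
      · exact absurd (le_bot_iff.1 hle) (EReal.coe_ne_bot _)
    exact ⟨fun x hx y hy a b ha hb hab => (combo hx hy ha hb hab).1,
      fun x hx y hy a b ha hb hab => (combo hx hy ha hb hab).2⟩
  · intro h x y μ hμ₀ hμ₁
    -- At the endpoints `0 * ⊥ = 0` in `EReal`, so a value `⊥` is absorbing only for `0 < μ < 1`.
    rcases hμ₀.eq_or_lt with rfl | hμ₀
    · simp
    rcases hμ₁.eq_or_lt with rfl | hμ₁
    · simp
    by_cases hx : p x
    · by_cases hy : p y
      · have hmem : p ((1 - μ) • x + μ • y) :=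
          h.1 hx hy (sub_pos.2 hμ₁).le hμ₀.le (sub_add_cancel 1 μ)
        simp only [if_pos hx, if_pos hy, if_pos hmem]
        exact_mod_cast h.2 hx hy (sub_pos.2 hμ₁).le hμ₀.le (sub_add_cancel 1 μ)
      · simp only [if_neg hy, EReal.coe_mul_bot_of_pos hμ₀, EReal.add_bot, bot_le]
    · simp only [if_neg hx, EReal.coe_mul_bot_of_pos (sub_pos.2 hμ₁), EReal.bot_add, bot_le]

theorem erealConcaveOn_lfun_iff {α : ℝ} {v : E → ℝ} :
    ERealConcaveOn (fun x => Lfun α (v x)) ↔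
      ConvexOn ℝ {x | 0 < v x} fun x => (-log (v x)) ^ (1 / α) :=
  erealConcaveOn_ite_bot_iff.trans neg_concaveOn_iff

theorem erealConcaveOn_lfun_of_le {α β : ℝ} {v : E → ℝ} (hα : 0 < α) (hαβ : α ≤ β)
    (hv : ∀ x, v x ≤ 1) (h : ERealConcaveOn fun x => Lfun β (v x)) :
    ERealConcaveOn fun x => Lfun α (v x) := by
  rw [erealConcaveOn_lfun_iff] at h ⊢
  have neg_log_nonneg : ∀ x ∈ {x | 0 < v x}, 0 ≤ -log (v x) := fun x hx =>
    neg_nonneg.2 (log_nonpos (le_of_lt hx) (hv x))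
  exact convexOn_rpow_of_le neg_log_nonneg (one_div_pos.2 (hα.trans_le hαβ))
    (one_div_le_one_div_of_le hα hαβ) h

end Concavity

theorem exists_pos_forall_mul_le_one {ι : Type*} {u : ι → ℝ} (hu : BddAbove (Set.range u)) :
    ∃ κ₀ : ℝ, 0 < κ₀ ∧ ∀ κ : ℝ, 0 < κ → κ ≤ κ₀ → ∀ x, κ * u x ≤ 1 := by
  obtain ⟨M, hM⟩ := hu
  have hM' : 0 < max M 1 := lt_max_of_lt_right one_pos
  refine ⟨(max M 1)⁻¹, inv_pos.2 hM', fun κ hκ hκle x => ?_⟩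
  calc κ * u x ≤ (max M 1)⁻¹ * max M 1 :=
        mul_le_mul_of_nonneg hκle (le_max_of_le_left (hM ⟨x, rfl⟩)) hκ.le hM'.le
    _ = 1 := inv_mul_cancel₀ hM'.ne'

theorem bddAbove_range_zeroExt {N : ℕ} {Ω : Set (EuclideanSpace ℝ (Fin N))}
    {u : EuclideanSpace ℝ (Fin N) → ℝ} (hu : ∃ M : ℝ, ∀ x ∈ Ω, u x ≤ M) :
    BddAbove (Set.range (zeroExt Ω u)) := by
  obtain ⟨M, hM⟩ := hu
  refine ⟨max M 0, Set.forall_mem_range.2 fun x => ?_⟩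
  exact Set.indicator_apply_le' (fun hx => le_max_of_le_left (hM x hx)) fun _ => le_max_right M 0

theorem beta_logconcave_implies_alpha_logconcave_general {N : ℕ} {α β : ℝ} (hα : 0 < α)
    (hαβ : α ≤ β) {u : EuclideanSpace ℝ (Fin N) → ℝ} (hu : BddAbove (Set.range u))
    (hβ : AlphaLogConcave β u) : AlphaLogConcave α u := by
  obtain ⟨κ₀, hκ₀, hconc⟩ := hβ
  obtain ⟨κ₁, hκ₁, hle_one⟩ := exists_pos_forall_mul_le_one hu
  refine ⟨min κ₀ κ₁, lt_min hκ₀ hκ₁, fun κ hκ hκle => ?_⟩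
  exact erealConcaveOn_lfun_of_le hα hαβ (hle_one κ hκ (hκle.trans (min_le_right _ _)))
    (hconc κ hκ (hκle.trans (min_le_left _ _)))

/-- If `0 < α ≤ β` and `u` is `β`-logconcave in a convex set `Ω`, then `u` is
`α`-logconcave in `Ω`. -/
theorem beta_logconcave_implies_alpha_logconcave
    (N : ℕ) (α β : ℝ) (hα : 0 < α) (hαβ : α ≤ β)
    (Ω : Set (EuclideanSpace ℝ (Fin N))) (hΩ : Convex ℝ Ω)
    (u : EuclideanSpace ℝ (Fin N) → ℝ)
    (h0 : ∀ x ∈ Ω, 0 ≤ u x) (hbd : ∃ M : ℝ, ∀ x ∈ Ω, u x ≤ M)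
    (hβ : AlphaLogConcave β (zeroExt Ω u)) :
    AlphaLogConcave α (zeroExt Ω u) :=
  beta_logconcave_implies_alpha_logconcave_general hα hαβ (bddAbove_range_zeroExt hbd) hβ
end

section
/- Let γ ∈ (0,1]. The function g_γ : (-∞,0) → ℝ defined by g_γ(s) := -(1/γ)(-s)^{(1-γ)/γ} + ((γ-1)/γ) s^{-1} + 1 is convex on (-∞,0) if and only if 1/2 ≤ γ ≤ 1. -/
open MeasureTheory Real

/-!
The substitution `s = -t` turns the function into a combination `a t ^ p + b t ^ q + c` of two
distinct powers of `t > 0`, with `p = (1 - γ) / γ` and `q = -1`. Its second derivative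
`a p (p - 1) t ^ (p - 2) + b q (q - 1) t ^ (q - 2)` is again a combination of two distinct powers.
Either one dominates the other as `t → 0` or as `t → ∞`, so there is no cancellation: the function
is convex iff both coefficients of the second derivative are nonnegative. Since `a = -(p + 1)` and
`b = p`, this says `0 ≤ p ≤ 1`.
-/

open Set Filter
open scoped Topology

theorem convexOn_neg_comp_neg_iff {𝕜 E β : Type*} [Semiring 𝕜] [PartialOrder 𝕜] [AddCommGroup E]
    [Module 𝕜 E] [AddCommMonoid β] [PartialOrder β] [SMul 𝕜 β] {s : Set E} {f : E → β} :
    ConvexOn 𝕜 (-s) (fun x ↦ f (-x)) ↔ ConvexOn 𝕜 s f := by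
  have reflect {s : Set E} {f : E → β} (h : ConvexOn 𝕜 s f) :
      ConvexOn 𝕜 (-s) (fun x ↦ f (-x)) := h.comp_linearMap (-LinearMap.id)
  exact ⟨fun h ↦ by simpa using reflect h, reflect⟩

theorem convexOn_iff_forall_nonneg_of_hasDerivAt2 {s : Set ℝ} (hs : Convex ℝ s) (hso : IsOpen s)
    {f f' f'' : ℝ → ℝ} (hf : ∀ x ∈ s, HasDerivAt f (f' x) x)
    (hf' : ∀ x ∈ s, HasDerivAt f' (f'' x) x) :
    ConvexOn ℝ s f ↔ ∀ x ∈ s, 0 ≤ f'' x := by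
  constructor
  · intro hconv x hx
    have hmono : MonotoneOn f' s :=
      (hconv.monotoneOn_deriv fun y hy ↦ (hf y hy).differentiableAt).congr
        fun y hy ↦ (hf y hy).deriv
    have hacc : AccPt x (𝓟 s) := by
      simpa using (PerfectSpace.univ_preperfect x (mem_univ x)).nhds_inter (hso.mem_nhds hx)
    exact (hf' x hx).hasDerivWithinAt.nonneg_of_monotoneOn hacc hmono
  · intro hnonneg
    rw [← hso.interior_eq] at hf hf' hnonneg
    exact convexOn_of_hasDerivWithinAt2_nonneg hs
      (fun x hx ↦ (hf x (hso.interior_eq.symm ▸ hx)).continuousAt.continuousWithinAt)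
      (fun x hx ↦ (hf x hx).hasDerivWithinAt) (fun x hx ↦ (hf' x hx).hasDerivWithinAt) hnonneg

section RpowCombination

variable {a b p q : ℝ}

theorem nonneg_left_of_forall_mul_rpow_add_mul_rpow_nonneg (hpq : p ≠ q)
    (h : ∀ t > 0, 0 ≤ a * t ^ p + b * t ^ q) : 0 ≤ a := by
  have affine_nonneg : ∀ u > 0, 0 ≤ a + b * u := by
    intro u hu
    set t := u ^ (q - p)⁻¹
    have ht : 0 < t := rpow_pos_of_pos hu _
    have hu_eq : t ^ (q - p) = u := rpow_inv_rpow hu.le (sub_ne_zero.mpr hpq.symm)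
    have hfactor : a * t ^ p + b * t ^ q = t ^ p * (a + b * u) := by
      rw [← hu_eq, mul_add, mul_left_comm, ← rpow_add ht, add_sub_cancel, mul_comm a]
    exact nonneg_of_mul_nonneg_right (hfactor ▸ h t ht) (rpow_pos_of_pos ht p)
  have hlim : Tendsto (fun u ↦ a + b * u) (𝓝[>] 0) (𝓝 a) := by
    have hcont : Continuous fun u ↦ a + b * u := by fun_prop
    simpa using (hcont.tendsto 0).mono_left nhdsWithin_le_nhds
  exact ge_of_tendsto hlim (eventually_mem_nhdsWithin.mono affine_nonneg)

theorem forall_mul_rpow_add_mul_rpow_nonneg_iff (hpq : p ≠ q) :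
    (∀ t > 0, 0 ≤ a * t ^ p + b * t ^ q) ↔ 0 ≤ a ∧ 0 ≤ b := by
  constructor
  · intro h
    exact ⟨nonneg_left_of_forall_mul_rpow_add_mul_rpow_nonneg hpq h,
      nonneg_left_of_forall_mul_rpow_add_mul_rpow_nonneg hpq.symm
        fun t ht ↦ add_comm (a * t ^ p) _ ▸ h t ht⟩
  · rintro ⟨ha, hb⟩ t ht
    positivity

theorem hasDerivAt_mul_rpow_add_mul_rpow_add_const (a b p q c : ℝ) {t : ℝ} (ht : 0 < t) :
    HasDerivAt (fun t ↦ a * t ^ p + b * t ^ q + c)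
      (a * p * t ^ (p - 1) + b * q * t ^ (q - 1)) t := by
  simp only [mul_assoc]
  exact (((hasDerivAt_rpow_const (.inl ht.ne')).const_mul a).add
    ((hasDerivAt_rpow_const (.inl ht.ne')).const_mul b)).add_const c

theorem convexOn_mul_rpow_add_mul_rpow_add_const_iff (hpq : p ≠ q) (c : ℝ) :
    ConvexOn ℝ (Ioi 0) (fun t : ℝ ↦ a * t ^ p + b * t ^ q + c) ↔
      0 ≤ a * p * (p - 1) ∧ 0 ≤ b * q * (q - 1) := by
  have hf' : ∀ t ∈ Ioi (0 : ℝ), HasDerivAt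
      (fun t ↦ a * p * t ^ (p - 1) + b * q * t ^ (q - 1))
      (a * p * (p - 1) * t ^ (p - 1 - 1) + b * q * (q - 1) * t ^ (q - 1 - 1)) t := by
    intro t ht
    simpa using hasDerivAt_mul_rpow_add_mul_rpow_add_const (a * p) (b * q) (p - 1) (q - 1) 0 ht
  rw [convexOn_iff_forall_nonneg_of_hasDerivAt2 (convex_Ioi 0) isOpen_Ioi
    (fun t ht ↦ hasDerivAt_mul_rpow_add_mul_rpow_add_const a b p q c ht) hf']
  exact forall_mul_rpow_add_mul_rpow_nonneg_iff (by simpa using hpq)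

end RpowCombination

theorem neg_add_one_mul_mul_sub_one_nonneg_iff {p : ℝ} (hp : 0 ≤ p) :
    0 ≤ -(p + 1) * p * (p - 1) ↔ p ≤ 1 := by
  constructor
  · intro h
    contrapose! h
    have : 0 < (p + 1) * p * (p - 1) := by
      have : 0 < p - 1 := sub_pos.mpr h
      have : 0 < p := one_pos.trans h
      positivity
    linarith
  · intro h
    have : 0 ≤ 1 - p := sub_nonneg.mpr h
    calc
      0 ≤ (p + 1) * p * (1 - p) := by positivity
      _ = -(p + 1) * p * (p - 1) := by ring

theorem convexOn_Iio_rpow_sub_inv_add_const_iff {p : ℝ} (hp : p ≠ -1) (c : ℝ) :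
    ConvexOn ℝ (Iio 0) (fun s : ℝ ↦ -(p + 1) * (-s) ^ p - p * s⁻¹ + c) ↔ p ∈ Icc 0 1 :=
  calc
    _ ↔ ConvexOn ℝ (-Ioi 0) (fun s : ℝ ↦ -(p + 1) * (-s) ^ p + p * (-s) ^ (-1 : ℝ) + c) := by
      simp only [neg_Ioi, neg_zero, rpow_neg_one, inv_neg, mul_neg, sub_eq_add_neg]
    _ ↔ ConvexOn ℝ (Ioi 0) (fun t : ℝ ↦ -(p + 1) * t ^ p + p * t ^ (-1 : ℝ) + c) :=
      convexOn_neg_comp_neg_iff (f := fun t : ℝ ↦ -(p + 1) * t ^ p + p * t ^ (-1 : ℝ) + c)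
    _ ↔ 0 ≤ -(p + 1) * p * (p - 1) ∧ 0 ≤ p * -1 * (-1 - 1) :=
      convexOn_mul_rpow_add_mul_rpow_add_const_iff hp c
    _ ↔ 0 ≤ -(p + 1) * p * (p - 1) ∧ 0 ≤ p :=
      and_congr_right fun _ ↦ by constructor <;> intro <;> linarith
    _ ↔ p ≤ 1 ∧ 0 ≤ p := and_congr_left neg_add_one_mul_mul_sub_one_nonneg_iff
    _ ↔ p ∈ Icc 0 1 := and_comm

theorem one_sub_div_self_mem_Icc_zero_one_iff {γ : ℝ} (hγ : γ ≠ 0) :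
    (1 - γ) / γ ∈ Icc 0 1 ↔ γ ∈ Icc (1 / 2) 1 := by
  rcases hγ.lt_or_gt with hneg | hpos
  · have hdiv : (1 - γ) / γ < 0 := div_neg_of_pos_of_neg (by linarith) hneg
    exact iff_of_false (fun h ↦ hdiv.not_ge h.1) (fun h ↦ by linarith [h.1])
  · rw [mem_Icc, mem_Icc, le_div_iff₀ hpos, div_le_one hpos]
    constructor <;> rintro ⟨hleft, hright⟩ <;> constructor <;> linarith

theorem convexity_aux_iff_general (γ : ℝ) (hγ : γ ≠ 0) :
    ConvexOn ℝ (Iio (0 : ℝ))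
      (fun s : ℝ ↦ -(1 / γ) * (-s) ^ ((1 - γ) / γ) + ((γ - 1) / γ) * s⁻¹ + 1) ↔
    1 / 2 ≤ γ ∧ γ ≤ 1 := by
  have hcoeff : 1 / γ = (1 - γ) / γ + 1 := by field_simp; ring
  have hcoeff_inv : (γ - 1) / γ = -((1 - γ) / γ) := by ring
  have hexp : (1 - γ) / γ ≠ -1 := fun h ↦ one_div_ne_zero hγ (by rw [hcoeff, h]; norm_num)
  simp only [hcoeff, hcoeff_inv, neg_mul _ (_⁻¹), ← sub_eq_add_neg]
  rw [convexOn_Iio_rpow_sub_inv_add_const_iff hexp]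
  exact one_sub_div_self_mem_Icc_zero_one_iff hγ

/-- For `γ ∈ (0,1]`, the function
`s ↦ -(1/γ)(-s)^{(1-γ)/γ} + ((γ-1)/γ) s⁻¹ + 1` is convex on `(-∞,0)` iff `1/2 ≤ γ`. -/
theorem convexity_aux_iff (γ : ℝ) (h0 : 0 < γ) (h1 : γ ≤ 1) :
    ConvexOn ℝ (Set.Iio (0 : ℝ))
      (fun s : ℝ => -(1 / γ) * (-s) ^ ((1 - γ) / γ) + ((γ - 1) / γ) * s⁻¹ + 1) ↔
    1 / 2 ≤ γ :=
  (convexity_aux_iff_general γ h0.ne').trans (and_iff_left h1)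
end

section
/- Let p > 0 and α > 0. Then there exists δ ∈ (0,1) such that for all a, b ∈ (0,δ] and all μ ∈ [0,1], ((1-μ)a^p + μ b^p)^{1/p} ≥ exp( -[ (1-μ)(-log a)^{1/α} + μ(-log b)^{1/α} ]^α ). -/
open MeasureTheory Real

/-!
In the coordinate `x = (-log a) ^ (1 / α)` the `α`-logarithmic mean becomes the arithmetic mean and
`a ^ p` becomes `exp (-(p * x ^ α))`, so the inequality is Jensen's inequality for this function,
raised to the power `1 / p`. The second derivative of `exp (-(p * x ^ α))` has the sign of
`p * x ^ α - (1 - 1 / α)`, which is nonnegative as soon as `a` is small, because `x ^ α = -log a`.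
-/

section ExpNegMulRpow

variable {p α x : ℝ}

theorem hasDerivAt_exp_neg_mul_rpow (hx : 0 < x) :
    HasDerivAt (fun y ↦ exp (-(p * y ^ α))) (-(p * α) * x ^ (α - 1) * exp (-(p * x ^ α))) x := by
  refine ((hasDerivAt_rpow_const (p := α) (Or.inl hx.ne')).const_mul p).fun_neg.exp.congr_deriv ?_
  ring

theorem hasDerivAt_rpow_sub_one_mul_exp_neg_mul_rpow (hx : 0 < x) :
    HasDerivAt (fun y ↦ y ^ (α - 1) * exp (-(p * y ^ α)))
      (x ^ (α - 2) * (α - 1 - α * (p * x ^ α)) * exp (-(p * x ^ α))) x := by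
  have rpow_mul_rpow : x ^ (α - 1) * x ^ (α - 1) = x ^ (α - 2) * x ^ α := by
    rw [← rpow_add hx, ← rpow_add hx]
    ring_nf
  refine ((hasDerivAt_rpow_const (p := α - 1) (Or.inl hx.ne')).fun_mul
    (hasDerivAt_exp_neg_mul_rpow hx)).congr_deriv ?_
  rw [show α - 1 - 1 = α - 2 by ring]
  linear_combination -p * α * exp (-(p * x ^ α)) * rpow_mul_rpow

theorem convex_setOf_le_mul_rpow (hp : 0 ≤ p) (c : ℝ) :
    Convex ℝ {x ∈ Set.Ioi (0 : ℝ) | c ≤ p * x ^ α} := by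
  rcases le_total 0 α with hα | hα
  · have mono : MonotoneOn (fun x : ℝ ↦ p * x ^ α) (Set.Ioi 0) := fun x hx y _ hxy ↦
      mul_le_mul_of_nonneg_left (rpow_le_rpow (le_of_lt hx) hxy hα) hp
    exact mono.convex_ge (convex_Ioi 0) c
  · have anti : AntitoneOn (fun x : ℝ ↦ p * x ^ α) (Set.Ioi 0) := fun x hx y _ hxy ↦
      mul_le_mul_of_nonneg_left (rpow_le_rpow_of_nonpos hx hxy hα) hp
    exact anti.convex_ge (convex_Ioi 0) c

theorem convexOn_exp_neg_mul_rpow (hp : 0 ≤ p) (hα : α ≠ 0) :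
    ConvexOn ℝ {x ∈ Set.Ioi (0 : ℝ) | 1 - 1 / α ≤ p * x ^ α} fun x ↦ exp (-(p * x ^ α)) := by
  refine convexOn_of_hasDerivWithinAt2_nonneg (convex_setOf_le_mul_rpow hp _)
    (fun x hx ↦ (hasDerivAt_exp_neg_mul_rpow hx.1).continuousAt.continuousWithinAt)
    (fun x hx ↦ (hasDerivAt_exp_neg_mul_rpow (interior_subset hx).1).hasDerivWithinAt)
    (f'' := fun x ↦
      -(p * α) * (x ^ (α - 2) * (α - 1 - α * (p * x ^ α)) * exp (-(p * x ^ α))))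
    (fun x hx ↦ ?_) (fun x hx ↦ ?_)
  · simpa only [mul_assoc] using ((hasDerivAt_rpow_sub_one_mul_exp_neg_mul_rpow
      (interior_subset hx).1).const_mul (-(p * α))).hasDerivWithinAt
  · obtain ⟨hx_pos : 0 < x, hx_large⟩ := interior_subset hx
    calc
      0 ≤ p * α ^ 2 * x ^ (α - 2) * (p * x ^ α - (1 - 1 / α)) * exp (-(p * x ^ α)) := by
        have := sub_nonneg.2 hx_large
        positivity
      _ = -(p * α) * (x ^ (α - 2) * (α - 1 - α * (p * x ^ α)) * exp (-(p * x ^ α))) := by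
        field_simp
        ring

end ExpNegMulRpow

section Means

variable {p α a b μ : ℝ}

theorem exp_neg_mul_rpow_neg_log_rpow (p : ℝ) (hα : α ≠ 0) (ha : 0 < a) (ha' : a ≤ 1) :
    exp (-(p * ((-log a) ^ (1 / α)) ^ α)) = a ^ p := by
  rw [one_div, rpow_inv_rpow (neg_nonneg.2 (log_nonpos ha.le ha')) hα, rpow_def_of_pos ha]
  ring_nf

theorem neg_log_rpow_mem_setOf_le_mul_rpow {c : ℝ} (hα : α ≠ 0) (ha : 0 < a) (ha' : a < 1)
    (hc : c ≤ p * -log a) :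
    (-log a) ^ (1 / α) ∈ {x ∈ Set.Ioi (0 : ℝ) | c ≤ p * x ^ α} := by
  have neg_log_pos : 0 < -log a := neg_pos.2 (log_neg ha ha')
  refine ⟨rpow_pos_of_pos neg_log_pos _, ?_⟩
  rwa [one_div, rpow_inv_rpow neg_log_pos.le hα]

theorem exp_neg_rpow_log_mean_le_power_mean (hp : 0 < p) (hα : α ≠ 0)
    (ha : 0 < a) (ha' : a < 1) (hpa : 1 - 1 / α ≤ p * -log a)
    (hb : 0 < b) (hb' : b < 1) (hpb : 1 - 1 / α ≤ p * -log b) (hμ : 0 ≤ μ) (hμ' : μ ≤ 1) :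
    exp (-((1 - μ) * (-log a) ^ (1 / α) + μ * (-log b) ^ (1 / α)) ^ α) ≤
      ((1 - μ) * a ^ p + μ * b ^ p) ^ (1 / p) := by
  set m := (1 - μ) * (-log a) ^ (1 / α) + μ * (-log b) ^ (1 / α)
  have jensen : exp (-(p * m ^ α)) ≤ (1 - μ) * a ^ p + μ * b ^ p := by
    simpa only [smul_eq_mul, exp_neg_mul_rpow_neg_log_rpow p hα ha ha'.le,
      exp_neg_mul_rpow_neg_log_rpow p hα hb hb'.le] using
      (convexOn_exp_neg_mul_rpow hp.le hα).2 (neg_log_rpow_mem_setOf_le_mul_rpow hα ha ha' hpa)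
        (neg_log_rpow_mem_setOf_le_mul_rpow hα hb hb' hpb) (sub_nonneg.2 hμ') hμ
        (sub_add_cancel 1 μ)
  calc
    exp (-m ^ α) = exp (-(p * m ^ α)) ^ (1 / p) := by
      rw [← exp_mul]
      field_simp
    _ ≤ ((1 - μ) * a ^ p + μ * b ^ p) ^ (1 / p) := by gcongr

end Means

theorem power_mean_ge_log_mean_general (p α : ℝ) (hp : 0 < p) (hα : α ≠ 0) :
    ∃ δ : ℝ, 0 < δ ∧ δ < 1 ∧ ∀ a b : ℝ, 0 < a → a ≤ δ → 0 < b → b ≤ δ →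
      ∀ μ : ℝ, 0 ≤ μ → μ ≤ 1 →
        exp (-((1 - μ) * (-log a) ^ (1 / α) + μ * (-log b) ^ (1 / α)) ^ α) ≤
          ((1 - μ) * a ^ p + μ * b ^ p) ^ (1 / p) := by
  set δ := exp (-((1 + |1 / α|) / p))
  have δ_lt_one : δ < 1 := exp_lt_one_iff.2 (neg_neg_of_pos (by positivity))
  have threshold {c : ℝ} (hc : 0 < c) (hcδ : c ≤ δ) : 1 - 1 / α ≤ p * -log c := by
    have log_le : (1 + |1 / α|) / p ≤ -log c := le_neg.2 ((log_le_iff_le_exp hc).2 hcδ)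
    calc
      1 - 1 / α ≤ 1 + |1 / α| := by linarith [neg_abs_le (1 / α)]
      _ ≤ p * -log c := (div_le_iff₀' hp).1 log_le
  exact ⟨δ, exp_pos _, δ_lt_one, fun a b ha haδ hb hbδ μ hμ hμ' ↦
    exp_neg_rpow_log_mean_le_power_mean hp hα ha (haδ.trans_lt δ_lt_one) (threshold ha haδ)
      hb (hbδ.trans_lt δ_lt_one) (threshold hb hbδ) hμ hμ'⟩

/-- For `p > 0` and `α > 0` there is `δ ∈ (0,1)` such that for all
`a, b ∈ (0,δ]` and `μ ∈ [0,1]`,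
`((1-μ)a^p + μb^p)^{1/p} ≥ exp(-[(1-μ)(-log a)^{1/α} + μ(-log b)^{1/α}]^α)`. -/
theorem power_mean_ge_log_mean (p α : ℝ) (hp : 0 < p) (hα : 0 < α) :
    ∃ δ : ℝ, 0 < δ ∧ δ < 1 ∧ ∀ a b : ℝ, 0 < a → a ≤ δ → 0 < b → b ≤ δ →
      ∀ μ : ℝ, 0 ≤ μ → μ ≤ 1 →
        Real.exp (-((1 - μ) * (-Real.log a) ^ (1 / α) +
            μ * (-Real.log b) ^ (1 / α)) ^ α) ≤
          ((1 - μ) * a ^ p + μ * b ^ p) ^ (1 / p) :=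
  power_mean_ge_log_mean_general p α hp hα.ne'
end
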